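/- arXiv:1206.3021 — 2 statements merged into one kernel-verified Lean document; each statement's English description precedes it below -/
import Mathlib

section
/- Two distinct lines of 𝒢(V) are neighboring if and only if they have at least two common points. -/
/-! Context: `K` a field, `V` a commutative, associative, unital 2-dimensional `K`-algebra in
which every element is a product of two elements; `V₀ = K·r ∪ K·s` is the set of non-units.
Points and lines of the geometry `𝒢(V)` are represented by triples in `V × V × V` with
trivial annihilator, up to multiplication by a unit. -/

/-- The triple `p` has trivial annihilator (so `V*p` is a point/line of `𝒢(V)`). -/
def TrivAnn {V : Type} [CommRing V] (p : V × V × V) : Prop :=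
  ∀ v : V, v * p.1 = 0 → v * p.2.1 = 0 → v * p.2.2 = 0 → v = 0

/-- The point (represented by) `p` is incident with the line (represented by) `L`. -/
def Incid {V : Type} [CommRing V] (p L : V × V × V) : Prop :=
  L.1 * p.1 + L.2.1 * p.2.1 + L.2.2 * p.2.2 = 0

/-- Two points (or two lines) are neighboring. -/
def Nbr {V : Type} [CommRing V] (p q : V × V × V) : Prop :=
  ∃ k l : V, (k, l) ≠ ((0 : V), (0 : V)) ∧
    (k * p.1, k * p.2.1, k * p.2.2) = (l * q.1, l * q.2.1, l * q.2.2)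

/-- The point `p` and the line `L` are neighboring. -/
def NbrPL {V : Type} [CommRing V] (p L : V × V × V) : Prop :=
  ¬ IsUnit (L.1 * p.1 + L.2.1 * p.2.1 + L.2.2 * p.2.2)

/-- `p` and `q` represent the same point (resp. line) of `𝒢(V)`. -/
def SameCls {V : Type} [CommRing V] (p q : V × V × V) : Prop :=
  ∃ u : V, IsUnit u ∧ (u * p.1, u * p.2.1, u * p.2.2) = q

/-- The standing hypotheses on the algebra `V` over `K`: it is `2`-dimensional, every element
is a product of two elements, and the set of non-units is `K·r ∪ K·s`. -/
def GoodAlg (K : Type) [Field K] (V : Type) [CommRing V] [Algebra K V] (r s : V) : Prop :=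
  Module.finrank K V = 2 ∧ (∀ v : V, ∃ a b : V, v = a * b) ∧
    (∀ v : V, ¬ IsUnit v ↔ ((∃ k : K, v = k • r) ∨ (∃ k : K, v = k • s)))

theorem comp_of_nonunit {K : Type} [Field K] {V : Type} [CommRing V] [Algebra K V] {r s : V}
    (h : ∀ v : V, ¬ IsUnit v ↔ ((∃ k : K, v = k • r) ∨ (∃ k : K, v = k • s)))
    (x y : V) (hx : ¬ IsUnit x) (hy : ¬ IsUnit y) (hxy : ¬ IsUnit (x + y)) :
    ∃ t : V, x = t * y ∨ y = t * x := by
  have key : ∀ (m : V) (α β : K), ∃ t : V, α • m = t * (β • m) ∨ β • m = t * (α • m) := by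
    intro m α β
    by_cases hb : β = 0
    · exact ⟨0, Or.inr (by simp [hb])⟩
    · refine ⟨algebraMap K V (α / β), Or.inl ?_⟩
      rw [← Algebra.smul_def, smul_smul, div_mul_cancel₀ _ hb]
  rw [h] at hx hy hxy
  rcases hx with ⟨α, rfl⟩ | ⟨α, rfl⟩ <;> rcases hy with ⟨β, rfl⟩ | ⟨β, rfl⟩
  · exact key _ _ _
  · rcases hxy with ⟨κ, hk⟩ | ⟨κ, hk⟩
    · have : β • s = (κ - α) • r := by rw [sub_smul, ← hk]; abel
      rw [this]; exact key _ _ _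
    · have : α • r = (κ - β) • s := by rw [sub_smul, ← hk]; abel
      rw [this]; exact key _ _ _
  · rcases hxy with ⟨κ, hk⟩ | ⟨κ, hk⟩
    · have : α • s = (κ - β) • r := by rw [sub_smul, ← hk]; abel
      rw [this]; exact key _ _ _
    · have : β • r = (κ - α) • s := by rw [sub_smul, ← hk]; abel
      rw [this]; exact key _ _ _
  · exact key _ _ _

theorem unit_of_ann {K : Type} [Field K] {V : Type} [CommRing V] [Algebra K V]
    (h : Module.finrank K V = 2) (m : V) (hm : ∀ v : V, v * m = 0 → v = 0) : IsUnit m := by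
  have : Module.Finite K V := Module.finite_of_finrank_pos (by omega)
  have hinj : Function.Injective (LinearMap.mulLeft K m) := by
    rw [injective_iff_map_eq_zero]
    intro v hv
    exact hm v (by rw [mul_comm]; simpa using hv)
  obtain ⟨w, hw⟩ := (LinearMap.injective_iff_surjective.mp hinj) 1
  exact IsUnit.of_mul_eq_one w (by simpa using hw)

theorem unimod {K : Type} [Field K] {V : Type} [CommRing V] [Algebra K V] {r s : V}
    (hV : GoodAlg K V r s) (p : V × V × V) (hp : TrivAnn p) :
    ∃ x y z : V, x * p.1 + y * p.2.1 + z * p.2.2 = 1 := by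
  obtain ⟨hf, -, h⟩ := hV
  obtain ⟨a, b, c⟩ := p
  simp only [TrivAnn] at hp ⊢
  by_contra hcon
  have hnu : ∀ x y z : V, ¬ IsUnit (x * a + y * b + z * c) := by
    rintro x y z hu
    obtain ⟨w, hw⟩ := hu.exists_right_inv
    exact hcon ⟨w * x, w * y, w * z, by rw [← hw]; ring⟩
  have H : ∀ x y z x' y' z' : V, ∃ t : V, x * a + y * b + z * c = t * (x' * a + y' * b + z' * c) ∨
      x' * a + y' * b + z' * c = t * (x * a + y * b + z * c) := by
    intro x y z x' y' z'
    refine comp_of_nonunit h _ _ (hnu _ _ _) (hnu _ _ _) ?_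
    have := hnu (x + x') (y + y') (z + z')
    rw [show x * a + y * b + z * c + (x' * a + y' * b + z' * c) =
      (x + x') * a + (y + y') * b + (z + z') * c by ring]
    exact this
  have hab := H 1 0 0 0 1 0
  have hbc := H 0 1 0 0 0 1
  have hac := H 1 0 0 0 0 1
  have fin : ∀ m : V, ¬ IsUnit m → m ∣ a → m ∣ b → m ∣ c → False := by
    rintro m hm ⟨a', ha⟩ ⟨b', hb⟩ ⟨c', hc⟩
    refine hm (unit_of_ann hf m fun v hv => hp v ?_ ?_ ?_)
    · rw [ha, ← mul_assoc, hv, zero_mul]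
    · rw [hb, ← mul_assoc, hv, zero_mul]
    · rw [hc, ← mul_assoc, hv, zero_mul]
  have na : ¬ IsUnit a := by simpa using hnu 1 0 0
  have nb : ¬ IsUnit b := by simpa using hnu 0 1 0
  have nc : ¬ IsUnit c := by simpa using hnu 0 0 1
  simp only [one_mul, zero_mul, add_zero, zero_add] at hab hbc hac
  have D : ∀ x y : V, (∃ t, x = t * y ∨ y = t * x) → y ∣ x ∨ x ∣ y := by
    rintro x y ⟨t, ht | ht⟩
    · exact Or.inl (Dvd.intro_left t ht.symm)
    · exact Or.inr (Dvd.intro_left t ht.symm)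
  rcases D _ _ hab with h1 | h1
  · rcases D _ _ hbc with h2 | h2
    · exact fin c nc (h2.trans h1) h2 dvd_rfl
    · exact fin b nb h1 dvd_rfl h2
  · rcases D _ _ hac with h2 | h2
    · exact fin c nc h2 (h2.trans h1) dvd_rfl
    · exact fin a na dvd_rfl h1 h2

theorem stable {K : Type} [Field K] {V : Type} [CommRing V] [Algebra K V] {r s : V}
    (hV : GoodAlg K V r s) (x y g h : V) (hxy : g * x + h * y = 1) :
    ∃ t : V, IsUnit (x + t * y) := by
  by_cases hx : IsUnit x
  · exact ⟨0, by simpa using hx⟩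
  by_cases hy : IsUnit y
  · obtain ⟨w, hw⟩ := hy.exists_right_inv
    refine ⟨w * (1 - x), ?_⟩
    have : x + w * (1 - x) * y = 1 := by linear_combination (1 - x) * hw
    rw [this]; exact isUnit_one
  refine ⟨1, ?_⟩
  rw [one_mul]
  by_contra hc
  obtain ⟨t, ht | ht⟩ := comp_of_nonunit hV.2.2 x y hx hy hc
  · exact hy (IsUnit.of_mul_eq_one (g * t + h) (by rw [ht] at hxy; linear_combination hxy))
  · exact hx (IsUnit.of_mul_eq_one (g + h * t) (by rw [ht] at hxy; linear_combination hxy))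

/-- Two distinct lines of `𝒢(V)` are neighboring iff they have at least two
common points. -/
theorem stmt7 (K : Type) [Field K] (V : Type) [CommRing V] [Algebra K V] (r s : V)
    (hV : GoodAlg K V r s)
    (L₁ L₂ : V × V × V) (hL₁ : TrivAnn L₁) (hL₂ : TrivAnn L₂)
    (hne : ¬ SameCls L₁ L₂) :
    Nbr L₁ L₂ ↔ ∃ P Q : V × V × V, TrivAnn P ∧ TrivAnn Q ∧ ¬ SameCls P Q ∧
      Incid P L₁ ∧ Incid P L₂ ∧ Incid Q L₁ ∧ Incid Q L₂ := by
  constructor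
  · rintro ⟨k, l, hkl, heq⟩
    obtain ⟨x, y, z, h1⟩ := unimod hV L₁ hL₁
    obtain ⟨x', y', z', h2⟩ := unimod hV L₂ hL₂
    have hst := stable hV L₁.1 (y * L₁.2.1 + z * L₁.2.2) x 1 (by linear_combination h1)
    obtain ⟨a, b, c⟩ := L₁
    obtain ⟨a', b', c'⟩ := L₂
    simp only [Prod.mk.injEq, ne_eq] at *
    obtain ⟨e1, e2, e3⟩ := heq
    have hk : k = l * (x * a' + y * b' + z * c') := by
      linear_combination x * e1 + y * e2 + z * e3 - k * h1
    have hl : l = k * (x' * a + y' * b + z' * c) := by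
      linear_combination -x' * e1 - y' * e2 - z' * e3 - l * h2
    have hl0 : l ≠ 0 := by
      rintro rfl
      exact hkl ⟨by simpa using hk, rfl⟩
    have hlu : ¬ IsUnit l := by
      intro hu
      obtain ⟨w, hw⟩ := hu.exists_right_inv
      refine hne ⟨w * k, ?_, ?_⟩
      · refine IsUnit.of_mul_eq_one (x' * a + y' * b + z' * c) ?_
        linear_combination hw - w * hl
      · simp only [Prod.mk.injEq]
        exact ⟨by linear_combination w * e1 + a' * hw, by linear_combination w * e2 + b' * hw,
          by linear_combination w * e3 + c' * hw⟩
    obtain ⟨t, ht⟩ := hst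
    obtain ⟨v, hv⟩ := ht.exists_right_inv
    obtain ⟨p, hp⟩ : ∃ p, p = t * y := ⟨_, rfl⟩
    obtain ⟨q, hq⟩ : ∃ q, q = t * z := ⟨_, rfl⟩
    have hv' : (a + p * b + q * c) * v = 1 := by rw [hp, hq]; linear_combination hv
    let X : V → V → V × V × V := fun y z =>
      (-v * (b * y + c * z), y - p * v * (b * y + c * z), z - q * v * (b * y + c * z))
    have hX1 : ∀ y z, Incid (X y z) (a, b, c) := by
      intro y z
      simp only [Incid, X]
      linear_combination -(b * y + c * z) * hv'
    have hXy : ∀ y z, (X y z).2.1 - p * (X y z).1 = y := by intro y z; simp only [X]; ring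
    have hXz : ∀ y z, (X y z).2.2 - q * (X y z).1 = z := by intro y z; simp only [X]; ring
    obtain ⟨B, hB⟩ : ∃ B, B = -v * b * a' + (1 - p * v * b) * b' - q * v * b * c' := ⟨_, rfl⟩
    obtain ⟨C, hC⟩ : ∃ C, C = -v * c * a' - p * v * c * b' + (1 - q * v * c) * c' := ⟨_, rfl⟩
    have hlB : l * B = 0 := by
      rw [hB]
      linear_combination v * b * e1 - (1 - p * v * b) * e2 + q * v * b * e3 - k * b * hv'
    have hlC : l * C = 0 := by
      rw [hC]
      linear_combination v * c * e1 + p * v * c * e2 - (1 - q * v * c) * e3 - k * c * hv'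
    have hX2 : ∀ y z, B * y + C * z = 0 → Incid (X y z) (a', b', c') := by
      intro y z h
      simp only [Incid, X]
      rw [← h, hB, hC]; ring
    have hXann : ∀ y z, (IsUnit y ∨ IsUnit z) → TrivAnn (X y z) := by
      intro y z hyz u u1 u2 u3
      rcases hyz with h | h
      · have : u * y = 0 := by rw [← hXy y z]; linear_combination u2 - p * u1
        exact (h.mul_left_eq_zero).mp this
      · have : u * z = 0 := by rw [← hXz y z]; linear_combination u3 - q * u1
        exact (h.mul_left_eq_zero).mp this
    have hXs : ∀ y z y' z', SameCls (X y z) (X y' z') → ∃ u, u * y = y' ∧ u * z = z' := by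
      rintro y z y' z' ⟨u, -, hu⟩
      refine ⟨u, ?_, ?_⟩
      · rw [← hXy y z, ← hXy y' z', ← hu]; ring
      · rw [← hXz y z, ← hXz y' z', ← hu]; ring
    have nonu : ∀ m, l * m = 0 → ¬ IsUnit m := by
      intro m hm hu
      exact hl0 ((hu.mul_left_eq_zero).mp hm)
    obtain ⟨τ, hτ | hτ⟩ := comp_of_nonunit hV.2.2 B C (nonu _ hlB) (nonu _ hlC)
      (nonu _ (by rw [mul_add, hlB, hlC, add_zero]))
    · refine ⟨X 1 (-τ), X 1 (-τ + l), hXann _ _ (Or.inl isUnit_one),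
        hXann _ _ (Or.inl isUnit_one), ?_, hX1 _ _, hX2 _ _ ?_, hX1 _ _, hX2 _ _ ?_⟩
      · intro hs
        obtain ⟨u, hu1, hu2⟩ := hXs _ _ _ _ hs
        rw [mul_one] at hu1
        exact hl0 (by rw [hu1] at hu2; linear_combination -hu2)
      · linear_combination hτ
      · linear_combination hτ + hlC
    · refine ⟨X (-τ) 1, X (-τ + l) 1, hXann _ _ (Or.inr isUnit_one),
        hXann _ _ (Or.inr isUnit_one), ?_, hX1 _ _, hX2 _ _ ?_, hX1 _ _, hX2 _ _ ?_⟩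
      · intro hs
        obtain ⟨u, hu1, hu2⟩ := hXs _ _ _ _ hs
        rw [mul_one] at hu2
        exact hl0 (by rw [hu2] at hu1; linear_combination -hu1)
      · linear_combination hτ
      · linear_combination hτ + hlB
  · rintro ⟨P, Q, hP, hQ, hPQ, p1, p2, q1, q2⟩
    by_contra hN
    obtain ⟨x, y, z, h2⟩ := unimod hV L₂ hL₂
    obtain ⟨a, b, c⟩ := L₁
    obtain ⟨a', b', c'⟩ := L₂
    have hc : TrivAnn (b * c' - c * b', c * a' - a * c', a * b' - b * a') := by
      intro v v1 v2 v3
      by_contra hv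
      refine hN ⟨v, v * (x * a + y * b + z * c), ?_, ?_⟩
      · intro h
        exact hv (Prod.mk.inj h).1
      · simp only [Prod.mk.injEq] at *
        refine ⟨?_, ?_, ?_⟩
        · linear_combination (-v * a) * h2 + y * v3 - z * v2
        · linear_combination (-v * b) * h2 + z * v1 - x * v3
        · linear_combination (-v * c) * h2 + x * v2 - y * v1
    obtain ⟨d, e, f, hd⟩ := unimod hV _ hc
    simp only at hd
    have main : ∀ R : V × V × V, TrivAnn R → Incid R (a, b, c) → Incid R (a', b', c') →
        ∃ m, IsUnit m ∧ R = (m * (b * c' - c * b'), m * (c * a' - a * c'),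
          m * (a * b' - b * a')) := by
      rintro ⟨X, Y, Z⟩ hR r1 r2
      simp only [Incid] at r1 r2
      have e1 : X = (d * X + e * Y + f * Z) * (b * c' - c * b') := by
        linear_combination (-X) * hd - e * (c' * r1 - c * r2) + f * (b' * r1 - b * r2)
      have e2 : Y = (d * X + e * Y + f * Z) * (c * a' - a * c') := by
        linear_combination (-Y) * hd - f * (a' * r1 - a * r2) + d * (c' * r1 - c * r2)
      have e3 : Z = (d * X + e * Y + f * Z) * (a * b' - b * a') := by
        linear_combination (-Z) * hd - d * (b' * r1 - b * r2) + e * (a' * r1 - a * r2)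
      refine ⟨d * X + e * Y + f * Z, unit_of_ann hV.1 _ fun v hv => hR v ?_ ?_ ?_, ?_⟩
      · simp only; rw [e1, ← mul_assoc, hv, zero_mul]
      · simp only; rw [e2, ← mul_assoc, hv, zero_mul]
      · simp only; rw [e3, ← mul_assoc, hv, zero_mul]
      · simp only [Prod.mk.injEq]
        exact ⟨e1, e2, e3⟩
    obtain ⟨m, hm, rfl⟩ := main P hP p1 p2
    obtain ⟨n, hn, rfl⟩ := main Q hQ q1 q2
    obtain ⟨w, hw⟩ := hm.exists_right_inv
    refine hPQ ⟨n * w, hn.mul (IsUnit.of_mul_eq_one m (by linear_combination hw)), ?_⟩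
    simp only [Prod.mk.injEq]
    refine ⟨?_, ?_, ?_⟩
    · linear_combination n * (b * c' - c * b') * hw
    · linear_combination n * (c * a' - a * c') * hw
    · linear_combination n * (a * b' - b * a') * hw
end

section
/- The group GL₃(V) acts transitively on the family of all proper ordered quadrangles of 𝒢(V): for any two proper ordered quadrangles (P₁,P₂,P₃,P₄) and (Q₁,Q₂,Q₃,Q₄) there exists M ∈ GL₃(V) with Pᵢ^M = Qᵢ for i = 1,2,3,4. Moreover, any M ∈ GL₃(V) fixing each point of some proper ordered quadrangle is a scalar matrix k·I with k ∈ V*. -/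
/-- A proper ordered triangle: three pairwise non-neighboring points such that the three
(unique) joining lines are pairwise non-neighboring. -/
def ProperTri {V : Type} [CommRing V] (P₁ P₂ P₃ : V × V × V) : Prop :=
  ¬ Nbr P₁ P₂ ∧ ¬ Nbr P₂ P₃ ∧ ¬ Nbr P₃ P₁ ∧
  ∃ L₁₂ L₂₃ L₃₁ : V × V × V,
    TrivAnn L₁₂ ∧ TrivAnn L₂₃ ∧ TrivAnn L₃₁ ∧
    Incid P₁ L₁₂ ∧ Incid P₂ L₁₂ ∧ Incid P₂ L₂₃ ∧ Incid P₃ L₂₃ ∧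
    Incid P₃ L₃₁ ∧ Incid P₁ L₃₁ ∧
    ¬ Nbr L₁₂ L₂₃ ∧ ¬ Nbr L₂₃ L₃₁ ∧ ¬ Nbr L₃₁ L₁₂

/-- A proper ordered quadrangle: every ordered subtriple is a proper ordered triangle. -/
def ProperQuad {V : Type} [CommRing V] (P₁ P₂ P₃ P₄ : V × V × V) : Prop :=
  ∀ i j k : Fin 4, i ≠ j → i ≠ k → j ≠ k →
    ProperTri (![P₁, P₂, P₃, P₄] i) (![P₁, P₂, P₃, P₄] j) (![P₁, P₂, P₃, P₄] k)

/-- The action of a 3×3 matrix on (representatives of) points: row vector times matrix. -/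
def actP {V : Type} [CommRing V] (M : Matrix (Fin 3) (Fin 3) V) (p : V × V × V) : V × V × V :=
  (Matrix.vecMul ![p.1, p.2.1, p.2.2] M 0,
   Matrix.vecMul ![p.1, p.2.1, p.2.2] M 1,
   Matrix.vecMul ![p.1, p.2.1, p.2.2] M 2)

/-- The corresponding action on (representatives of) lines: `(a,b,c) ↦ (a,b,c)·(M⁻¹)ᵗ`. -/
noncomputable def actL {V : Type} [CommRing V] (M : Matrix (Fin 3) (Fin 3) V) (L : V × V × V) : V × V × V :=
  actP (M⁻¹).transpose L

def det3 {V : Type} [CommRing V] (p q r : V × V × V) : V :=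
  p.1 * (q.2.1 * r.2.2 - q.2.2 * r.2.1) + p.2.1 * (q.2.2 * r.1 - q.1 * r.2.2)
    + p.2.2 * (q.1 * r.2.1 - q.2.1 * r.1)

/-- Over a 2-dimensional algebra, a triple with trivial annihilator is unimodular. -/
lemma trivAnn_unimod (K : Type) [Field K] {V : Type} [CommRing V] [Algebra K V]
    (h2 : Module.finrank K V = 2) (w : V × V × V) (hw : TrivAnn w) :
    ∃ a b c : V, a * w.1 + b * w.2.1 + c * w.2.2 = 1 := by
  have : FiniteDimensional K V := Module.finite_of_finrank_eq_succ h2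
  have : Nontrivial V := Module.nontrivial_of_finrank_pos (R := K) (by omega)
  by_contra hcon
  push Not at hcon
  set I : Ideal V := Ideal.span {w.1, w.2.1, w.2.2} with hI
  have hne : I ≠ ⊤ := by
    intro h
    rw [Ideal.eq_top_iff_one, hI, Ideal.mem_span_insert] at h
    obtain ⟨a, z, hz, h⟩ := h
    rw [Ideal.mem_span_pair] at hz
    obtain ⟨b, c, hz⟩ := hz
    apply hcon a b c
    rw [h, ← hz]; ring
  have hlt : I.restrictScalars K < ⊤ := by
    rw [lt_top_iff_ne_top]
    intro h
    exact hne ((Submodule.restrictScalars_eq_top_iff K V V).1 h)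
  have hr := Submodule.finrank_lt hlt.ne
  have hr1 : Module.finrank K (I.restrictScalars K) ≤ 1 := by omega
  obtain ⟨t, ht⟩ := finrank_le_one_iff.1 hr1
  have hmem1 : w.1 ∈ I := Ideal.subset_span (by simp)
  have hmem2 : w.2.1 ∈ I := Ideal.subset_span (by simp)
  have hmem3 : w.2.2 ∈ I := Ideal.subset_span (by simp)
  have htn : ¬ IsUnit (t : V) := fun hu => hne (Ideal.eq_top_of_isUnit_mem I t.2 hu)
  have : IsArtinianRing V := IsArtinianRing.of_finite K V
  have : ∃ z : V, z * (t : V) = 0 ∧ z ≠ 0 := by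
    by_contra hz
    push Not at hz
    apply htn
    apply IsArtinianRing.isUnit_of_mem_nonZeroDivisors
    exact mem_nonZeroDivisors_iff_right.2 hz
  obtain ⟨z, hz, hz0⟩ := this
  have hk : ∀ x ∈ I, z * x = 0 := by
    intro x hx
    obtain ⟨k, hk⟩ := ht ⟨x, hx⟩
    have : k • (t : V) = x := congrArg Subtype.val hk
    rw [← this, mul_smul_comm, hz, smul_zero]
  exact hz0 (hw z (hk _ hmem1) (hk _ hmem2) (hk _ hmem3))

lemma isUnit_of_reg (K : Type) [Field K] {V : Type} [CommRing V] [Algebra K V]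
    (h2 : Module.finrank K V = 2) (d : V) (h : ∀ v, v * d = 0 → v = 0) : IsUnit d := by
  have : FiniteDimensional K V := Module.finite_of_finrank_eq_succ h2
  have : IsArtinianRing V := IsArtinianRing.of_finite K V
  apply IsArtinianRing.isUnit_of_mem_nonZeroDivisors
  exact mem_nonZeroDivisors_iff_right.2 h

lemma nbr_of {V : Type} [CommRing V] {p q : V × V × V} (h : ¬ Nbr p q) (k l : V)
    (h1 : k * p.1 = l * q.1) (h2 : k * p.2.1 = l * q.2.1) (h3 : k * p.2.2 = l * q.2.2) :
    k = 0 ∧ l = 0 := by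
  by_contra hc
  apply h
  refine ⟨k, l, ?_, by rw [h1, h2, h3]⟩
  intro he
  exact hc (Prod.mk.inj he)

/-- The cross product of two triples. -/
def crossT {V : Type} [CommRing V] (q r : V × V × V) : V × V × V :=
  (q.2.1 * r.2.2 - q.2.2 * r.2.1, q.2.2 * r.1 - q.1 * r.2.2, q.1 * r.2.1 - q.2.1 * r.1)

lemma cross_trivAnn {V : Type} [CommRing V] {p q : V × V × V} (h : ¬ Nbr p q) :
    TrivAnn (crossT p q) := by
  intro x h1 h2 h3
  simp only [crossT] at h1 h2 h3
  have e1 : x * p.1 = 0 := by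
    have := (nbr_of h (x * q.1) (x * p.1) (by ring) (by linear_combination -h3)
      (by linear_combination h2)).2
    exact this
  have e2 : x * p.2.1 = 0 :=
    (nbr_of h (x * q.2.1) (x * p.2.1) (by linear_combination h3) (by ring)
      (by linear_combination -h1)).2
  have e3 : x * p.2.2 = 0 :=
    (nbr_of h (x * q.2.2) (x * p.2.2) (by linear_combination -h2)
      (by linear_combination h1) (by ring)).2
  exact (nbr_of h x 0 (by simpa using e1) (by simpa using e2) (by simpa using e3)).1

/-- A triple orthogonal to `p` and `q` is a multiple of a unimodular cross product. -/
lemma perp_mul {V : Type} [CommRing V] {p q L : V × V × V} {a b c : V}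
    (hw : a * (crossT p q).1 + b * (crossT p q).2.1 + c * (crossT p q).2.2 = 1)
    (hp : Incid p L) (hq : Incid q L) :
    L.1 = (a * L.1 + b * L.2.1 + c * L.2.2) * (crossT p q).1 ∧
    L.2.1 = (a * L.1 + b * L.2.1 + c * L.2.2) * (crossT p q).2.1 ∧
    L.2.2 = (a * L.1 + b * L.2.1 + c * L.2.2) * (crossT p q).2.2 := by
  simp only [Incid, crossT] at *
  refine ⟨?_, ?_, ?_⟩
  · linear_combination (-L.1) * hw + (b * p.2.2 - c * p.2.1) * hq - (b * q.2.2 - c * q.2.1) * hp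
  · linear_combination (-L.2.1) * hw + (c * p.1 - a * p.2.2) * hq - (c * q.1 - a * q.2.2) * hp
  · linear_combination (-L.2.2) * hw + (a * p.2.1 - b * p.1) * hq - (a * q.2.1 - b * q.1) * hp

lemma det3_unit (K : Type) [Field K] {V : Type} [CommRing V] [Algebra K V]
    (h2 : Module.finrank K V = 2) {p q r : V × V × V} (h : ProperTri p q r) :
    IsUnit (det3 p q r) := by
  obtain ⟨hpq, hqr, hrp, L, M, N, hL, hM, hN, i1, i2, i3, i4, i5, i6, n1, n2, n3⟩ := h
  obtain ⟨a, b, c, hw⟩ := trivAnn_unimod K h2 _ (cross_trivAnn hqr)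
  obtain ⟨ap, bp, cp, hwp⟩ := trivAnn_unimod K h2 _ (cross_trivAnn hpq)
  apply isUnit_of_reg K h2
  intro v hv
  obtain ⟨m1, m2, m3⟩ := perp_mul hw i3 i4
  obtain ⟨l1, l2, l3⟩ := perp_mul hwp i1 i2
  set u := a * M.1 + b * M.2.1 + c * M.2.2 with hu
  set t := ap * L.1 + bp * L.2.1 + cp * L.2.2 with ht
  have ht_unit : IsUnit t := by
    apply isUnit_of_reg K h2
    intro x hx
    apply hL x
    · rw [l1, ← mul_assoc, hx, zero_mul]
    · rw [l2, ← mul_assoc, hx, zero_mul]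
    · rw [l3, ← mul_assoc, hx, zero_mul]
  obtain ⟨e, he⟩ := ht_unit.exists_right_inv
  have hvp : Incid p (v * M.1, v * M.2.1, v * M.2.2) := by
    simp only [Incid]
    rw [m1, m2, m3]
    simp only [det3] at hv
    simp only [crossT]
    linear_combination u * hv
  have hvq : Incid q (v * M.1, v * M.2.1, v * M.2.2) := by
    simp only [Incid] at *
    linear_combination v * i3
  obtain ⟨k1, k2, k3⟩ := perp_mul hwp hvp hvq
  simp only at k1 k2 k3
  set m := ap * (v * M.1) + bp * (v * M.2.1) + cp * (v * M.2.2)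
  refine (nbr_of n1 (m * e) v ?_ ?_ ?_).2
  · rw [k1, l1]; linear_combination m * (crossT p q).1 * he
  · rw [k2, l2]; linear_combination m * (crossT p q).2.1 * he
  · rw [k3, l3]; linear_combination m * (crossT p q).2.2 * he

/-- The triple as a row vector. -/
def rowT {V : Type} (p : V × V × V) : Fin 3 → V := ![p.1, p.2.1, p.2.2]

lemma quad_frame (K : Type) [Field K] {V : Type} [CommRing V] [Algebra K V]
    (h2 : Module.finrank K V = 2) (P : Fin 4 → V × V × V)
    (h : ProperQuad (P 0) (P 1) (P 2) (P 3)) :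
    ∃ A : Matrix (Fin 3) (Fin 3) V, IsUnit A.det ∧ ∃ x : Fin 3 → V, (∀ i, IsUnit (x i)) ∧
      (∀ i : Fin 3, A i = x i • rowT (P i.castSucc)) ∧
      Matrix.vecMul (fun _ => 1) A = rowT (P 3) := by
  have d := det3_unit K h2 (h 0 1 2 (by decide) (by decide) (by decide))
  have d0 := det3_unit K h2 (h 3 1 2 (by decide) (by decide) (by decide))
  have d1 := det3_unit K h2 (h 0 3 2 (by decide) (by decide) (by decide))
  have d2 := det3_unit K h2 (h 0 1 3 (by decide) (by decide) (by decide))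
  change IsUnit (det3 (P 0) (P 1) (P 2)) at d
  change IsUnit (det3 (P 3) (P 1) (P 2)) at d0
  change IsUnit (det3 (P 0) (P 3) (P 2)) at d1
  change IsUnit (det3 (P 0) (P 1) (P 3)) at d2
  obtain ⟨e, he⟩ := d.exists_right_inv
  have hue : IsUnit e := IsUnit.of_mul_eq_one _ (by rw [mul_comm]; exact he)
  set x : Fin 3 → V := ![e * det3 (P 3) (P 1) (P 2), e * det3 (P 0) (P 3) (P 2),
    e * det3 (P 0) (P 1) (P 3)] with hx
  have hxu : ∀ i, IsUnit (x i) := by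
    intro i
    fin_cases i
    · exact hue.mul d0
    · exact hue.mul d1
    · exact hue.mul d2
  refine ⟨Matrix.of fun i => x i • rowT (P i.castSucc), ?_, x, hxu, fun i => rfl, ?_⟩
  · have : (Matrix.of fun i => x i • rowT (P (Fin.castSucc i))).det
        = x 0 * x 1 * x 2 * det3 (P 0) (P 1) (P 2) := by
      rw [Matrix.det_fin_three]
      simp only [Matrix.of_apply, Pi.smul_apply, smul_eq_mul]
      have c1 : (Fin.castSucc (1 : Fin 3)) = 1 := rfl
      have c2 : (Fin.castSucc (2 : Fin 3)) = 2 := rfl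
      simp only [rowT, det3, Fin.castSucc_zero, c1, c2, Matrix.cons_val]
      ring
    rw [this]
    exact (((hxu 0).mul (hxu 1)).mul (hxu 2)).mul d
  · funext j
    have c1 : (Fin.castSucc (1 : Fin 3)) = 1 := rfl
    have c2 : (Fin.castSucc (2 : Fin 3)) = 2 := rfl
    simp only [Matrix.vecMul, dotProduct, Fin.sum_univ_three, Matrix.of_apply, Pi.smul_apply,
      smul_eq_mul, hx, Fin.castSucc_zero, c1, c2]
    fin_cases j <;> simp only [rowT, det3, Fin.zero_eta, Fin.mk_one, Fin.reduceFinMk, Matrix.cons_val] <;>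
      simp only [det3] at he
    · linear_combination (P 3).1 * he
    · linear_combination (P 3).2.1 * he
    · linear_combination (P 3).2.2 * he

lemma sameCls_iff {V : Type} [CommRing V] (M : Matrix (Fin 3) (Fin 3) V) (p q : V × V × V) :
    SameCls (actP M p) q ↔ ∃ u : V, IsUnit u ∧ u • Matrix.vecMul (rowT p) M = rowT q := by
  refine exists_congr fun u => and_congr_right fun _ => ?_
  constructor
  · rintro rfl
    funext j
    fin_cases j <;> rfl
  · intro h
    exact Prod.ext (congrFun h 0) (Prod.ext (congrFun h 1) (congrFun h 2))

/-- `GL₃(V)` acts transitively on proper ordered quadrangles, and any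
matrix with unit determinant fixing each point of some proper ordered quadrangle is a
scalar matrix `k·I` with `k` a unit. -/
theorem stmt12 (K : Type) [Field K] (V : Type) [CommRing V] [Algebra K V] (r s : V)
    (hV : GoodAlg K V r s)
    (P Q : Fin 4 → V × V × V)
    (hP : ∀ i, TrivAnn (P i)) (hQ : ∀ i, TrivAnn (Q i))
    (hPq : ProperQuad (P 0) (P 1) (P 2) (P 3))
    (hQq : ProperQuad (Q 0) (Q 1) (Q 2) (Q 3)) :
    (∃ M : Matrix (Fin 3) (Fin 3) V, IsUnit M.det ∧
      ∀ i : Fin 4, SameCls (actP M (P i)) (Q i)) ∧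
    (∀ M : Matrix (Fin 3) (Fin 3) V, IsUnit M.det →
      (∀ i : Fin 4, SameCls (actP M (P i)) (P i)) →
      ∃ k : V, IsUnit k ∧ M = k • (1 : Matrix (Fin 3) (Fin 3) V)) := by
  obtain ⟨h2, -, -⟩ := hV
  obtain ⟨A, hA, x, hx, hAx, hA3⟩ := quad_frame K h2 P hPq
  obtain ⟨B, hB, y, hy, hBy, hB3⟩ := quad_frame K h2 Q hQq
  constructor
  · refine ⟨A⁻¹ * B, ?_, ?_⟩
    · rw [Matrix.det_mul]
      exact (Matrix.isUnit_nonsing_inv_det A hA).mul hB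
    · have hAM : A * (A⁻¹ * B) = B := by
        rw [← Matrix.mul_assoc, Matrix.mul_nonsing_inv A hA, Matrix.one_mul]
      intro i
      rw [sameCls_iff]
      refine Fin.lastCases ?_ (fun i => ?_) i
      · refine ⟨1, isUnit_one, ?_⟩
        change (1 : V) • Matrix.vecMul (rowT (P 3)) _ = rowT (Q 3)
        rw [one_smul, ← hA3, Matrix.vecMul_vecMul, hAM, hB3]
      · have hrow : x i • Matrix.vecMul (rowT (P i.castSucc)) (A⁻¹ * B)
            = y i • rowT (Q i.castSucc) := by
          rw [← Matrix.smul_vecMul, ← hAx, ← hBy, ← Matrix.mul_apply_eq_vecMul, hAM]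
        obtain ⟨e, he⟩ := (hy i).exists_left_inv
        refine ⟨e * x i, (IsUnit.of_mul_eq_one _ he).mul (hx i), ?_⟩
        rw [mul_smul, hrow, smul_smul, he, one_smul]
  · intro M hM hfix
    have hf : ∀ i, ∃ c : V, IsUnit c ∧ Matrix.vecMul (rowT (P i)) M = c • rowT (P i) := by
      intro i
      obtain ⟨u, hu, h⟩ := (sameCls_iff _ _ _).1 (hfix i)
      obtain ⟨e, he⟩ := hu.exists_left_inv
      refine ⟨e, IsUnit.of_mul_eq_one _ he, ?_⟩
      have hp := congrArg (fun z => e • z) h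
      simpa only [smul_smul, he, one_smul] using hp
    choose c hc hcM using hf
    have hAM : A * M = Matrix.diagonal (fun i : Fin 3 => c i.castSucc) * A := by
      ext i j
      rw [Matrix.diagonal_mul, Matrix.mul_apply_eq_vecMul, hAx, Matrix.smul_vecMul, hcM]
      simp only [Pi.smul_apply, smul_eq_mul]
      ring
    have hinj : ∀ v w : Fin 3 → V, Matrix.vecMul v A = Matrix.vecMul w A → v = w := by
      intro v w h
      have := congrArg (fun z => Matrix.vecMul z A⁻¹) h
      simpa [Matrix.vecMul_vecMul, Matrix.mul_nonsing_inv A hA] using this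
    have hcc : (fun i : Fin 3 => c i.castSucc) = fun _ => c 3 := by
      have h3 := hcM 3
      rw [← hA3, Matrix.vecMul_vecMul, hAM, ← Matrix.vecMul_vecMul, ← Matrix.smul_vecMul] at h3
      have h4 := hinj _ _ h3
      funext i
      have h5 := congrFun h4 i
      simpa [Matrix.vecMul_diagonal] using h5
    refine ⟨c 3, hc 3, ?_⟩
    rw [hcc] at hAM
    have : A⁻¹ * (A * M) = A⁻¹ * (c 3 • A) := by
      rw [hAM]
      congr 1
      ext i j
      simp [Matrix.diagonal_mul]
    rw [← Matrix.mul_assoc, Matrix.nonsing_inv_mul A hA, Matrix.one_mul, Matrix.mul_smul,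
      Matrix.nonsing_inv_mul A hA] at this
    exact this
end
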